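/- Let F_4 = [3,4,3] be the Coxeter group of the 24-cell, with standard generators r_0, r_1, r_2, r_3. If φ : F_4 → H is a group homomorphism which is injective on the subgroups ⟨r_0, r_1, r_2⟩ and ⟨r_1, r_2, r_3⟩, then the kernel of φ is contained in {±e}, the center of F_4. -/

import Mathlib

open CoxeterMatrix

/-!
Let `K = ker φ` and let `s = r 1`. For `k ∈ K` the element `k * s * k⁻¹ * s⁻¹` lies in `K` and is a
product of two conjugates of `s`. Any two conjugates of `s` can be moved simultaneously into
`⟨r 0, r 1, r 2⟩`, which meets `K` trivially, so `k` commutes with `s`. Hence `K` centralizes `r 1`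
and its conjugate `r 0`, and, reversing the diagram, also `r 2` and `r 3`.

The simultaneous conjugation comes from the geometry of the 24-cell: the twelve conjugates of `r 1`
are the reflections in three orthogonal frames of four roots each. The stabilizer of the standard
frame contains `r 1`, `r 2`, `r 3`, and has coset representatives `1`, `r 0`, `r 1 * r 0`.
-/

section Group

variable {G : Type*} [Group G]

theorem semiconjBy_symm_of_mul_self {g x y : G} (hg : g * g = 1) (h : SemiconjBy g x y) :
    SemiconjBy g y x := by
  simpa only [inv_eq_of_mul_eq_one_left hg] using h.inv_symm_left

theorem commute_of_semiconjBy {g x y x' y' : G} (hx : SemiconjBy g x x') (hy : SemiconjBy g y y')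
    (h : Commute x y) : Commute x' y' := by
  rw [eq_mul_inv_of_mul_eq hx.eq.symm, eq_mul_inv_of_mul_eq hy.eq.symm]
  exact (Commute.conj_iff g).mpr h

theorem semiconjBy_mul_mul_of_mul_self {g : G} (hg : g * g = 1) (x : G) :
    SemiconjBy g x (g * x * g) := by
  simpa only [inv_eq_of_mul_eq_one_left hg] using SemiconjBy.conj_mk g x

theorem mem_normalizer_range_of_semiconjBy {ι : Type*} {x : ι → G} {g : G} (σ : Equiv.Perm ι)
    (h : ∀ i, SemiconjBy g (x i) (x (σ i))) : g ∈ Subgroup.normalizer (Set.range x) := by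
  rw [Subgroup.mem_normalizer_iff_conj_image_eq, ← Set.range_comp, ← σ.surjective.range_comp x]
  exact congrArg Set.range (funext fun i => (eq_mul_inv_of_mul_eq (h i).eq.symm).symm)

theorem mul_mul_self_of_commute {x y : G} (hxy : Commute x y) (hx : x * x = 1) (hy : y * y = 1) :
    x * y * (x * y) = 1 := by
  rw [hxy.symm.mul_mul_mul_comm, hx, hy, one_mul]

/-- The elements `s` and `t` can be moved into the subgroup `L` by a common conjugation. -/
def JointlyConjInto (L : Subgroup G) (s t : G) : Prop :=
  ∃ s' ∈ L, ∃ t' ∈ L, ∃ g, SemiconjBy g s s' ∧ SemiconjBy g t t'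

namespace JointlyConjInto

variable {L N : Subgroup G} {s t s' t' g : G}

theorem of_mem (hs : s ∈ L) (ht : t ∈ L) : JointlyConjInto L s t :=
  ⟨s, hs, t, ht, 1, .one_left s, .one_left t⟩

theorem of_semiconjBy (hs : SemiconjBy g s s') (ht : SemiconjBy g t t')
    (h : JointlyConjInto L s' t') : JointlyConjInto L s t := by
  obtain ⟨s'', hs'', t'', ht'', k, hks, hkt⟩ := h
  exact ⟨s'', hs'', t'', ht'', k * g, hks.mul_left hs, hkt.mul_left ht⟩

theorem eq_of_mul_inv_mem [N.Normal] (h : JointlyConjInto L s t) (hNL : Disjoint N L)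
    (hst : t * s⁻¹ ∈ N) : t = s := by
  obtain ⟨s', hs', t', ht', g, hgs, hgt⟩ := h
  have hg : SemiconjBy g (t * s⁻¹) (t' * s'⁻¹) := hgt.mul_right hgs.inv_right
  have hN : t' * s'⁻¹ ∈ N := by
    rw [eq_mul_inv_of_mul_eq hg.eq.symm]
    exact Subgroup.Normal.conj_mem ‹_› _ hst g
  have hone : t' * s'⁻¹ = 1 :=
    Subgroup.disjoint_def.mp hNL hN (L.mul_mem ht' (L.inv_mem hs'))
  exact mul_inv_eq_one.mp (hg.eq_one_iff.mpr hone)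

end JointlyConjInto

theorem mem_centralizer_of_jointlyConjInto {L N : Subgroup G} [hN : N.Normal] {s : G}
    (h : ∀ w, JointlyConjInto L s (w * s * w⁻¹)) (hNL : Disjoint N L) :
    s ∈ Subgroup.centralizer (N : Set G) := by
  refine Subgroup.mem_centralizer_iff.mpr fun k hk => ?_
  have hcomm : k * s * k⁻¹ * s⁻¹ ∈ N := by
    simpa only [mul_assoc] using N.mul_mem hk (hN.conj_mem _ (N.inv_mem hk) s)
  exact mul_inv_eq_iff_eq_mul.mp ((h k).eq_of_mul_inv_mem hNL hcomm)

end Group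

section IsLiftable

variable {B G : Type*} [Group G] {M : CoxeterMatrix B} {f : B → G} {i j : B}

theorem mul_self_of_isLiftable (hf : M.IsLiftable f) (i : B) : f i * f i = 1 := by
  simpa only [M.diagonal, pow_one] using hf i i

theorem inv_apply_of_isLiftable (hf : M.IsLiftable f) (i : B) : (f i)⁻¹ = f i :=
  inv_eq_of_mul_eq_one_left (mul_self_of_isLiftable hf i)

theorem commute_of_isLiftable (hf : M.IsLiftable f) (hij : M i j = 2) : Commute (f i) (f j) := by
  have h : f i * f j * (f i * f j) = 1 := by simpa only [hij, pow_two] using hf i j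
  simpa only [commute_iff_eq, mul_inv_rev, inv_apply_of_isLiftable hf] using
    eq_inv_of_mul_eq_one_left h

theorem braid_of_isLiftable (hf : M.IsLiftable f) (hij : M i j = 3) :
    f i * f j * f i = f j * f i * f j := by
  have h : f i * f j * f i * (f j * f i * f j) = 1 := by
    simpa only [hij, pow_succ, pow_zero, one_mul, mul_assoc] using hf i j
  simpa only [mul_inv_rev, inv_apply_of_isLiftable hf, mul_assoc] using eq_inv_of_mul_eq_one_left h

theorem commute_conj_of_isLiftable (hf : M.IsLiftable f) (hij : M i j = 4) :
    Commute (f i) (f j * f i * f j) := by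
  have h : f i * (f j * f i * f j) * (f i * (f j * f i * f j)) = 1 := by
    simpa only [hij, pow_succ, pow_zero, one_mul, mul_assoc] using hf i j
  simpa only [commute_iff_eq, mul_inv_rev, inv_apply_of_isLiftable hf, mul_assoc] using
    eq_inv_of_mul_eq_one_left h

theorem isLiftable_simple (M : CoxeterMatrix B) : M.IsLiftable M.simple := by
  intro i j
  simpa only [M.toCoxeterSystem_simple] using M.toCoxeterSystem.simple_mul_simple_pow i j

theorem closure_range_simple (M : CoxeterMatrix B) :
    Subgroup.closure (Set.range M.simple) = ⊤ := by
  simpa only [M.toCoxeterSystem_simple] using M.toCoxeterSystem.subgroup_closure_range_simple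

end IsLiftable

section BraidedLeaves

variable {G : Type*} [Group G] {a x y z : G}

theorem braid_of_semiconjBy {g : G} (ha : Commute g a) (hxy : SemiconjBy g x y)
    (hax : a * x * a = x * a * x) : a * y * a = y * a * y := by
  have h₁ : SemiconjBy g (a * x * a) (a * y * a) := (SemiconjBy.mul_right ha hxy).mul_right ha
  have h₂ : SemiconjBy g (x * a * x) (y * a * y) := (hxy.mul_right ha).mul_right hxy
  rw [hax] at h₁
  exact mul_right_cancel (h₁.eq.symm.trans h₂.eq)

theorem semiconjBy_of_braid (ha : a * a = 1) (hax : a * x * a = x * a * x) :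
    SemiconjBy a x (x * a * x) := by
  rw [← hax]; exact semiconjBy_mul_mul_of_mul_self ha x

theorem semiconjBy_swap_leaves (ha : a * a = 1) (hx : x * x = 1) (hy : y * y = 1)
    (hxy : Commute x y) (hax : a * x * a = x * a * x) (hay : a * y * a = y * a * y) :
    SemiconjBy (a * (x * y) * a) x y := by
  have h : SemiconjBy (x * y) (x * a * x) (y * a * y) := by
    have hx' : SemiconjBy x (x * a * x) a :=
      semiconjBy_symm_of_mul_self hx (semiconjBy_mul_mul_of_mul_self hx a)
    rw [hxy.eq]
    exact (semiconjBy_mul_mul_of_mul_self hy a).mul_left hx'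
  exact ((semiconjBy_symm_of_mul_self ha (semiconjBy_of_braid ha hay)).mul_left h).mul_left
    (semiconjBy_of_braid ha hax)

theorem semiconjBy_fourth_leaf (ha : a * a = 1) (hx : x * x = 1) (hy : y * y = 1)
    (hxy : Commute x y) (hxz : Commute x z) (hyz : Commute y z)
    (haz : a * z * a = z * a * z) :
    SemiconjBy (a * (x * y) * a) z (a * (x * y * z * a * (x * y * z)) * a) := by
  have hsq : x * y * (x * y) = 1 := mul_mul_self_of_commute hxy hx hy
  have h : SemiconjBy (x * y) (z * a * z) (x * y * z * a * (x * y * z)) := by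
    have hz : x * y * z * a * (x * y * z) = x * y * (z * a * z) * (x * y) := by
      nth_rw 2 [(hxz.mul_left hyz).eq]
      simp only [mul_assoc]
    rw [hz]
    exact semiconjBy_mul_mul_of_mul_self hsq _
  exact ((semiconjBy_mul_mul_of_mul_self ha _).mul_left h).mul_left (semiconjBy_of_braid ha haz)

end BraidedLeaves

section OrthogonalFrame

variable {G : Type*} [Group G] {r : Fin 4 → G}

/-- Four pairwise commuting conjugates of `r 1`, which in `F₄` are the reflections in four mutually
orthogonal roots. The first three are the leaves of a `D₄` diagram with centre `r 0`. -/
def orthogonalFrame (r : Fin 4 → G) : Fin 4 → G :=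
  let x := r 1
  let y := r 2 * x * r 2
  let z := r 3 * y * r 3
  ![x, y, z, r 0 * (x * y * z * r 0 * (x * y * z)) * r 0]

theorem semiconjBy_two_orthogonalFrame_zero (hr : F₄.IsLiftable r) :
    SemiconjBy (r 2) (orthogonalFrame r 0) (orthogonalFrame r 1) :=
  semiconjBy_mul_mul_of_mul_self (mul_self_of_isLiftable hr 2) (r 1)

theorem commute_three_orthogonalFrame_zero (hr : F₄.IsLiftable r) :
    Commute (r 3) (orthogonalFrame r 0) :=
  commute_of_isLiftable hr rfl

theorem semiconjBy_three_orthogonalFrame_one (hr : F₄.IsLiftable r) :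
    SemiconjBy (r 3) (orthogonalFrame r 1) (orthogonalFrame r 2) :=
  semiconjBy_mul_mul_of_mul_self (mul_self_of_isLiftable hr 3) (r 2 * r 1 * r 2)

theorem commute_two_orthogonalFrame_two (hr : F₄.IsLiftable r) :
    Commute (r 2) (orthogonalFrame r 2) := by
  have hbraid : SemiconjBy (r 3 * r 2) (r 3) (r 2) :=
    (braid_of_isLiftable hr rfl).trans (mul_assoc _ _ _)
  exact commute_of_semiconjBy hbraid ((semiconjBy_three_orthogonalFrame_one hr).mul_left
    (semiconjBy_two_orthogonalFrame_zero hr)) (commute_three_orthogonalFrame_zero hr)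

theorem commute_orthogonalFrame_zero_one (hr : F₄.IsLiftable r) :
    Commute (orthogonalFrame r 0) (orthogonalFrame r 1) :=
  commute_conj_of_isLiftable hr rfl

theorem commute_orthogonalFrame_zero_two (hr : F₄.IsLiftable r) :
    Commute (orthogonalFrame r 0) (orthogonalFrame r 2) :=
  commute_of_semiconjBy (commute_three_orthogonalFrame_zero hr)
    (semiconjBy_three_orthogonalFrame_one hr) (commute_orthogonalFrame_zero_one hr)

theorem commute_orthogonalFrame_one_two (hr : F₄.IsLiftable r) :
    Commute (orthogonalFrame r 1) (orthogonalFrame r 2) :=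
  commute_of_semiconjBy (semiconjBy_two_orthogonalFrame_zero hr)
    (commute_two_orthogonalFrame_two hr) (commute_orthogonalFrame_zero_two hr)

theorem commute_orthogonalFrame_three {g : G} (hg : Commute g (r 0))
    (hprod : Commute g (orthogonalFrame r 0 * orthogonalFrame r 1 * orthogonalFrame r 2)) :
    Commute g (orthogonalFrame r 3) :=
  (hg.mul_right ((hprod.mul_right hg).mul_right hprod)).mul_right hg

theorem orthogonalFrame_mul_self (hr : F₄.IsLiftable r) {i : Fin 4} (hi : i ≠ 3) :
    orthogonalFrame r i * orthogonalFrame r i = 1 := by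
  have hzero : orthogonalFrame r 0 * orthogonalFrame r 0 = 1 := mul_self_of_isLiftable hr 1
  have hone : orthogonalFrame r 1 * orthogonalFrame r 1 = 1 := by
    have h := semiconjBy_two_orthogonalFrame_zero hr
    exact (h.mul_right h).eq_one_iff.mp hzero
  have htwo : orthogonalFrame r 2 * orthogonalFrame r 2 = 1 := by
    have h := semiconjBy_three_orthogonalFrame_one hr
    exact (h.mul_right h).eq_one_iff.mp hone
  fin_cases i
  exacts [hzero, hone, htwo, absurd rfl hi]

theorem semiconjBy_two_orthogonalFrame (hr : F₄.IsLiftable r) (i : Fin 4) :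
    SemiconjBy (r 2) (orthogonalFrame r i) (orthogonalFrame r (Equiv.swap 0 1 i)) := by
  have h₀₁ := semiconjBy_two_orthogonalFrame_zero hr
  have h₁₀ := semiconjBy_symm_of_mul_self (mul_self_of_isLiftable hr 2) h₀₁
  have h₂ := commute_two_orthogonalFrame_two hr
  have h₃ : Commute (r 2) (orthogonalFrame r 3) := by
    refine commute_orthogonalFrame_three (commute_of_isLiftable hr rfl) ?_
    have h := (h₀₁.mul_right h₁₀).mul_right h₂
    rwa [← (commute_orthogonalFrame_zero_one hr).eq] at h
  fin_cases i
  exacts [h₀₁, h₁₀, h₂, h₃]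

theorem semiconjBy_three_orthogonalFrame (hr : F₄.IsLiftable r) (i : Fin 4) :
    SemiconjBy (r 3) (orthogonalFrame r i) (orthogonalFrame r (Equiv.swap 1 2 i)) := by
  have h₀ := commute_three_orthogonalFrame_zero hr
  have h₁₂ := semiconjBy_three_orthogonalFrame_one hr
  have h₂₁ := semiconjBy_symm_of_mul_self (mul_self_of_isLiftable hr 3) h₁₂
  have h₃ : Commute (r 3) (orthogonalFrame r 3) := by
    refine commute_orthogonalFrame_three (commute_of_isLiftable hr rfl) ?_
    have h := SemiconjBy.mul_right h₀ (h₁₂.mul_right h₂₁)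
    rwa [← (commute_orthogonalFrame_one_two hr).eq, ← mul_assoc] at h
  fin_cases i
  exacts [h₀, h₁₂, h₂₁, h₃]

theorem braid_orthogonalFrame (hr : F₄.IsLiftable r) {i : Fin 4} (hi : i ≠ 3) :
    r 0 * orthogonalFrame r i * r 0 =
      orthogonalFrame r i * r 0 * orthogonalFrame r i := by
  have h₀ : r 0 * orthogonalFrame r 0 * r 0 = orthogonalFrame r 0 * r 0 * orthogonalFrame r 0 :=
    braid_of_isLiftable hr rfl
  have h₁ := braid_of_semiconjBy (commute_of_isLiftable hr rfl)
    (semiconjBy_two_orthogonalFrame_zero hr) h₀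
  have h₂ := braid_of_semiconjBy (commute_of_isLiftable hr rfl)
    (semiconjBy_three_orthogonalFrame_one hr) h₁
  fin_cases i
  exacts [h₀, h₁, h₂, absurd rfl hi]

/-- The product of the commuting reflections `r 0 * orthogonalFrame r i * r 0`, `i = 0, 1`. -/
def frameInvolution (r : Fin 4 → G) : G :=
  r 0 * (orthogonalFrame r 0 * orthogonalFrame r 1) * r 0

theorem semiconjBy_frameInvolution (hr : F₄.IsLiftable r) (i : Fin 4) :
    SemiconjBy (frameInvolution r) (orthogonalFrame r i)
      (orthogonalFrame r ((Equiv.swap 0 1 * Equiv.swap 2 3 : Equiv.Perm (Fin 4)) i)) := by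
  have hr₀ := mul_self_of_isLiftable hr 0
  have hx := orthogonalFrame_mul_self hr (i := 0) (by decide)
  have hy := orthogonalFrame_mul_self hr (i := 1) (by decide)
  have hxy := commute_orthogonalFrame_zero_one hr
  have hrx := braid_orthogonalFrame hr (i := 0) (by decide)
  have hry := braid_orthogonalFrame hr (i := 1) (by decide)
  have hinv : frameInvolution r * frameInvolution r = 1 := by
    have h := semiconjBy_mul_mul_of_mul_self hr₀ (orthogonalFrame r 0 * orthogonalFrame r 1)
    exact (h.mul_right h).eq_one_iff.mp (mul_mul_self_of_commute hxy hx hy)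
  have h₀₁ : SemiconjBy (frameInvolution r) (orthogonalFrame r 0) (orthogonalFrame r 1) :=
    semiconjBy_swap_leaves hr₀ hx hy hxy hrx hry
  have h₂₃ : SemiconjBy (frameInvolution r) (orthogonalFrame r 2) (orthogonalFrame r 3) :=
    semiconjBy_fourth_leaf hr₀ hx hy hxy (commute_orthogonalFrame_zero_two hr)
      (commute_orthogonalFrame_one_two hr) (braid_orthogonalFrame hr (by decide))
  fin_cases i
  exacts [h₀₁, semiconjBy_symm_of_mul_self hinv h₀₁, h₂₃, semiconjBy_symm_of_mul_self hinv h₂₃]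

theorem commute_one_orthogonalFrame (hr : F₄.IsLiftable r) (i : Fin 4) :
    Commute (r 1) (orthogonalFrame r i) := by
  fin_cases i
  exacts [.refl _, commute_orthogonalFrame_zero_one hr, commute_orthogonalFrame_zero_two hr,
    commute_of_semiconjBy (semiconjBy_frameInvolution hr 1) (semiconjBy_frameInvolution hr 2)
      (commute_orthogonalFrame_one_two hr)]

/-- The setwise stabilizer of the frame under conjugation. -/
abbrev frameNormalizer (r : Fin 4 → G) : Subgroup G :=
  Subgroup.normalizer (Set.range (orthogonalFrame r))

theorem simple_mem_frameNormalizer (hr : F₄.IsLiftable r) {i : Fin 4} (hi : i ≠ 0) :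
    r i ∈ frameNormalizer r := by
  fin_cases i
  exacts [absurd rfl hi, mem_normalizer_range_of_semiconjBy 1 (commute_one_orthogonalFrame hr),
    mem_normalizer_range_of_semiconjBy _ (semiconjBy_two_orthogonalFrame hr),
    mem_normalizer_range_of_semiconjBy _ (semiconjBy_three_orthogonalFrame hr)]

theorem frameInvolution_mem_frameNormalizer (hr : F₄.IsLiftable r) :
    frameInvolution r ∈ frameNormalizer r :=
  mem_normalizer_range_of_semiconjBy _ (semiconjBy_frameInvolution hr)

/-- Left coset representatives of `frameNormalizer r` in the group generated by `r`; in `F₄` they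
correspond to the three frames into which the conjugates of `r 1` fall. -/
abbrev frameTransversal (r : Fin 4 → G) : Set G :=
  {1, r 0, r 1 * r 0}

theorem two_mul_one_mul_zero_eq (hr : F₄.IsLiftable r) :
    r 2 * (r 1 * r 0) = r 1 * r 0 * (frameInvolution r * r 2) := by
  have h₀₂ : r 0 * r 2 = r 2 * r 0 := commute_of_isLiftable hr rfl
  have hframe : orthogonalFrame r 0 * orthogonalFrame r 1 = r 1 * (r 2 * r 1 * r 2) := rfl
  have hsq := mul_self_of_isLiftable hr
  calc r 2 * (r 1 * r 0) = r 2 * r 1 * (r 2 * r 2) * r 0 := by rw [hsq, mul_one, mul_assoc]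
    _ = r 1 * (r 0 * r 0) * (r 1 * (r 2 * r 1 * r 2)) * (r 2 * r 0) := by
      rw [hsq 0, mul_one, ← mul_assoc (r 1), hsq 1, one_mul]; simp only [mul_assoc]
    _ = r 1 * r 0 * (frameInvolution r * r 2) := by
      rw [frameInvolution, hframe, ← h₀₂]; simp only [mul_assoc]

theorem exists_simple_mul_frameTransversal_eq (hr : F₄.IsLiftable r) (i : Fin 4) {u : G}
    (hu : u ∈ frameTransversal r) :
    ∃ v ∈ frameTransversal r, ∃ n ∈ frameNormalizer r, r i * u = v * n := by
  have hsq := mul_self_of_isLiftable hr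
  have hN {j : Fin 4} (hj : j ≠ 0) : r j ∈ frameNormalizer r := simple_mem_frameNormalizer hr hj
  rcases hu with rfl | rfl | rfl <;> fin_cases i
  · exact ⟨r 0, by simp, 1, one_mem _, rfl⟩
  · exact ⟨1, by simp, r 1, hN (by decide), Commute.one_right _⟩
  · exact ⟨1, by simp, r 2, hN (by decide), Commute.one_right _⟩
  · exact ⟨1, by simp, r 3, hN (by decide), Commute.one_right _⟩
  · exact ⟨1, by simp, 1, one_mem _, by simpa using hsq 0⟩
  · exact ⟨r 1 * r 0, by simp, 1, one_mem _, by simp⟩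
  · exact ⟨r 0, by simp, r 2, hN (by decide), commute_of_isLiftable hr rfl⟩
  · exact ⟨r 0, by simp, r 3, hN (by decide), commute_of_isLiftable hr rfl⟩
  · refine ⟨r 1 * r 0, by simp, r 1, hN (by decide), ?_⟩
    exact (mul_assoc _ _ _).symm.trans (braid_of_isLiftable hr rfl)
  · exact ⟨r 0, by simp, 1, one_mem _, by simp [← mul_assoc, hsq]⟩
  · exact ⟨r 1 * r 0, by simp, frameInvolution r * r 2,
      mul_mem (frameInvolution_mem_frameNormalizer hr) (hN (by decide)),
      two_mul_one_mul_zero_eq hr⟩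
  · exact ⟨r 1 * r 0, by simp, r 3, hN (by decide),
      (commute_of_isLiftable hr rfl).mul_right (commute_of_isLiftable hr rfl)⟩

theorem exists_frameTransversal_mul_eq (hr : F₄.IsLiftable r) {w : G}
    (hw : w ∈ Subgroup.closure (Set.range r)) :
    ∃ u ∈ frameTransversal r, ∃ n ∈ frameNormalizer r, w = u * n := by
  have step (i : Fin 4) {y : G}
      (hy : ∃ u ∈ frameTransversal r, ∃ n ∈ frameNormalizer r, y = u * n) :
      ∃ u ∈ frameTransversal r, ∃ n ∈ frameNormalizer r, r i * y = u * n := by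
    obtain ⟨u, hu, n, hn, rfl⟩ := hy
    obtain ⟨v, hv, m, hm, h⟩ := exists_simple_mul_frameTransversal_eq hr i hu
    exact ⟨v, hv, m * n, mul_mem hm hn, by rw [← mul_assoc, h, mul_assoc]⟩
  induction hw using Subgroup.closure_induction_left with
  | one => exact ⟨1, by simp, 1, one_mem _, (one_mul 1).symm⟩
  | mul_left _ hi _ _ ih =>
    obtain ⟨i, rfl⟩ := hi
    exact step i ih
  | inv_mul_cancel _ hi _ _ ih =>
    obtain ⟨i, rfl⟩ := hi
    rw [inv_apply_of_isLiftable hr]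
    exact step i ih

theorem jointlyConjInto_orthogonalFrame (hr : F₄.IsLiftable r) {L : Subgroup G} (hL₁ : r 1 ∈ L)
    (hL₂ : r 2 ∈ L) (i : Fin 4) :
    JointlyConjInto L (r 1) (orthogonalFrame r i) := by
  have h₀ : JointlyConjInto L (r 1) (orthogonalFrame r 0) := .of_mem hL₁ hL₁
  have h₁ : JointlyConjInto L (r 1) (orthogonalFrame r 1) :=
    .of_mem hL₁ (mul_mem (mul_mem hL₂ hL₁) hL₂)
  have h₂ : JointlyConjInto L (r 1) (orthogonalFrame r 2) :=
    .of_semiconjBy (semiconjBy_three_orthogonalFrame hr 0)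
      (semiconjBy_three_orthogonalFrame hr 2) h₁
  have h₃ : JointlyConjInto L (r 1) (orthogonalFrame r 3) :=
    .of_semiconjBy (semiconjBy_frameInvolution hr 0) (semiconjBy_frameInvolution hr 3)
      (.of_semiconjBy (semiconjBy_two_orthogonalFrame hr 1)
        (semiconjBy_two_orthogonalFrame hr 2) h₂)
  fin_cases i
  exacts [h₀, h₁, h₂, h₃]

theorem semiconjBy_leafProduct_conj_orthogonalFrame_three (hr : F₄.IsLiftable r) :
    SemiconjBy (orthogonalFrame r 0 * orthogonalFrame r 1 * orthogonalFrame r 2)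
      (r 0 * orthogonalFrame r 3 * r 0) (r 0) := by
  set h := orthogonalFrame r 0 * orthogonalFrame r 1 * orthogonalFrame r 2
  have hx : orthogonalFrame r 3 = r 0 * (h * r 0 * h) * r 0 := rfl
  have hconj : r 0 * orthogonalFrame r 3 * r 0 = h * r 0 * h := by
    rw [hx, ← mul_assoc, ← mul_assoc, mul_self_of_isLiftable hr 0, one_mul, mul_assoc _ (r 0),
      mul_self_of_isLiftable hr 0, mul_one]
  have hh : h * h = 1 := by
    have hcomm : Commute (orthogonalFrame r 0 * orthogonalFrame r 1) (orthogonalFrame r 2) :=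
      (commute_orthogonalFrame_zero_two hr).mul_left (commute_orthogonalFrame_one_two hr)
    exact mul_mul_self_of_commute hcomm
      (mul_mul_self_of_commute (commute_orthogonalFrame_zero_one hr)
        (orthogonalFrame_mul_self hr (by decide)) (orthogonalFrame_mul_self hr (by decide)))
      (orthogonalFrame_mul_self hr (by decide))
  rw [hconj]
  exact semiconjBy_symm_of_mul_self hh (semiconjBy_mul_mul_of_mul_self hh (r 0))

theorem jointlyConjInto_conj_orthogonalFrame (hr : F₄.IsLiftable r) {L : Subgroup G}
    (hL₀ : r 0 ∈ L) (hL₁ : r 1 ∈ L) (hL₂ : r 2 ∈ L) (i : Fin 4) :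
    JointlyConjInto L (r 1) (r 0 * orthogonalFrame r i * r 0) := by
  have conj_mem {x : G} (hx : x ∈ L) : r 0 * x * r 0 ∈ L := mul_mem (mul_mem hL₀ hx) hL₀
  have h₀ : JointlyConjInto L (r 1) (r 0 * orthogonalFrame r 0 * r 0) := .of_mem hL₁ (conj_mem hL₁)
  have h₁ : JointlyConjInto L (r 1) (r 0 * orthogonalFrame r 1 * r 0) :=
    .of_mem hL₁ (conj_mem (mul_mem (mul_mem hL₂ hL₁) hL₂))
  have h₂ : JointlyConjInto L (r 1) (r 0 * orthogonalFrame r 2 * r 0) := by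
    have hr₃ : Commute (r 3) (r 0) := commute_of_isLiftable hr rfl
    exact .of_semiconjBy (semiconjBy_three_orthogonalFrame hr 0)
      ((SemiconjBy.mul_right hr₃ (semiconjBy_three_orthogonalFrame hr 2)).mul_right hr₃) h₁
  have h₃ : JointlyConjInto L (r 1) (r 0 * orthogonalFrame r 3 * r 0) := by
    have hcomm : Commute (orthogonalFrame r 0 * orthogonalFrame r 1 * orthogonalFrame r 2) (r 1) :=
      (((commute_one_orthogonalFrame hr 0).mul_right (commute_one_orthogonalFrame hr 1)).mul_right
        (commute_one_orthogonalFrame hr 2)).symm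
    exact .of_semiconjBy hcomm (semiconjBy_leafProduct_conj_orthogonalFrame_three hr)
      (.of_mem hL₁ hL₀)
  fin_cases i
  exacts [h₀, h₁, h₂, h₃]

theorem jointlyConjInto_conj (hr : F₄.IsLiftable r) {L : Subgroup G} (hL₀ : r 0 ∈ L)
    (hL₁ : r 1 ∈ L) (hL₂ : r 2 ∈ L) {w : G} (hw : w ∈ Subgroup.closure (Set.range r)) :
    JointlyConjInto L (r 1) (w * r 1 * w⁻¹) := by
  obtain ⟨u, hu, n, hn, rfl⟩ := exists_frameTransversal_mul_eq hr hw
  obtain ⟨i, hi⟩ : n * r 1 * n⁻¹ ∈ Set.range (orthogonalFrame r) :=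
    (Subgroup.mem_set_normalizer_iff.mp hn (r 1)).mp ⟨0, rfl⟩
  have hconj : u * n * r 1 * (u * n)⁻¹ = u * orthogonalFrame r i * u⁻¹ := by
    simp only [hi, mul_inv_rev, mul_assoc]
  have hinv := inv_apply_of_isLiftable hr
  have hframe := jointlyConjInto_conj_orthogonalFrame hr hL₀ hL₁ hL₂ i
  rw [hconj]
  rcases hu with rfl | rfl | rfl
  · simpa only [one_mul, inv_one, mul_one] using jointlyConjInto_orthogonalFrame hr hL₁ hL₂ i
  · rwa [hinv]
  · refine .of_semiconjBy (Commute.refl _) ?_ hframe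
    refine semiconjBy_symm_of_mul_self (mul_self_of_isLiftable hr 1) ?_
    simpa only [mul_inv_rev, hinv, mul_assoc] using
      SemiconjBy.conj_mk (r 1) (r 0 * orthogonalFrame r i * r 0)

end OrthogonalFrame

theorem simple_mem_centralizer {G : Type*} [Group G] {r : Fin 4 → G} (hr : F₄.IsLiftable r)
    (hgen : Subgroup.closure (Set.range r) = ⊤) {L N : Subgroup G} [N.Normal]
    (hL₀ : r 0 ∈ L) (hL₁ : r 1 ∈ L) (hL₂ : r 2 ∈ L) (hNL : Disjoint N L) :
    r 0 ∈ Subgroup.centralizer (N : Set G) ∧ r 1 ∈ Subgroup.centralizer (N : Set G) := by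
  have hone : r 1 ∈ Subgroup.centralizer (N : Set G) :=
    mem_centralizer_of_jointlyConjInto
      (fun _ => jointlyConjInto_conj hr hL₀ hL₁ hL₂ (hgen ▸ Subgroup.mem_top _)) hNL
  have hbraid : SemiconjBy (r 0 * r 1) (r 0) (r 1) :=
    (braid_of_isLiftable hr rfl).trans (mul_assoc _ _ _)
  have hzero : r 0 = (r 0 * r 1)⁻¹ * r 1 * ((r 0 * r 1)⁻¹)⁻¹ :=
    eq_mul_inv_of_mul_eq hbraid.inv_symm_left.eq.symm
  refine ⟨?_, hone⟩
  rw [hzero]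
  exact Subgroup.Normal.conj_mem inferInstance _ hone _

theorem isLiftable_comp_rev {G : Type*} [Group G] {r : Fin 4 → G} (hr : F₄.IsLiftable r) :
    F₄.IsLiftable (r ∘ Fin.rev) := by
  have hrev : ∀ i j : Fin 4, F₄ i.rev j.rev = F₄ i j := by
    intro i j; fin_cases i <;> fin_cases j <;> rfl
  intro i j
  simpa only [hrev, Function.comp_apply] using hr i.rev j.rev

theorem stmt_6_general {G H : Type*} [Group G] [Group H] {r : Fin 4 → G} (hr : F₄.IsLiftable r)
    (hgen : Subgroup.closure (Set.range r) = ⊤) (φ : G →* H)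
    (h012 : Set.InjOn φ (Subgroup.closure {r 0, r 1, r 2}))
    (h123 : Set.InjOn φ (Subgroup.closure {r 1, r 2, r 3})) :
    φ.ker ≤ Subgroup.center G := by
  have disjoint_ker {L : Subgroup G} (hL : Set.InjOn φ L) : Disjoint φ.ker L :=
    Subgroup.disjoint_def.mpr fun hx hxL => hL hxL L.one_mem (hx.trans φ.map_one.symm)
  have mem_closure {t : Set G} {x : G} (hx : x ∈ t) : x ∈ Subgroup.closure t :=
    Subgroup.subset_closure hx
  obtain ⟨h₀, h₁⟩ := simple_mem_centralizer hr hgen (mem_closure (by simp))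
    (mem_closure (by simp)) (mem_closure (by simp)) (disjoint_ker h012)
  have hrev : Subgroup.closure (Set.range (r ∘ Fin.rev)) = ⊤ := by
    rwa [Fin.rev_surjective.range_comp]
  obtain ⟨h₃, h₂⟩ := simple_mem_centralizer (isLiftable_comp_rev hr) hrev
    (mem_closure (show r 3 ∈ _ by simp)) (mem_closure (show r 2 ∈ _ by simp))
    (mem_closure (show r 1 ∈ _ by simp)) (disjoint_ker h123)
  have hrange : Set.range r ⊆ Subgroup.centralizer (φ.ker : Set G) := by
    rintro _ ⟨i, rfl⟩
    fin_cases i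
    exacts [h₀, h₁, h₂, h₃]
  rw [← SetLike.coe_subset_coe, ← Subgroup.centralizer_eq_top_iff_subset, eq_top_iff, ← hgen,
    Subgroup.closure_le]
  exact hrange

/-- Let `F₄ = [3,4,3]` be the Coxeter group of the 24-cell, with standard
generators `r_0, r_1, r_2, r_3`.  If `φ : F₄ → H` is a group homomorphism which is injective
on the subgroups `⟨r_0, r_1, r_2⟩` and `⟨r_1, r_2, r_3⟩` (each isomorphic to `B_3`), then
the kernel of `φ` is contained in the center `{±e}` of `F₄`. -/
theorem stmt_6 (H : Type*) [Group H] (φ : CoxeterMatrix.F₄.Group →* H)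
    (h012 : Set.InjOn φ (↑(Subgroup.closure
      {CoxeterMatrix.F₄.simple 0, CoxeterMatrix.F₄.simple 1, CoxeterMatrix.F₄.simple 2}) :
        Set CoxeterMatrix.F₄.Group))
    (h123 : Set.InjOn φ (↑(Subgroup.closure
      {CoxeterMatrix.F₄.simple 1, CoxeterMatrix.F₄.simple 2, CoxeterMatrix.F₄.simple 3}) :
        Set CoxeterMatrix.F₄.Group)) :
    φ.ker ≤ Subgroup.center CoxeterMatrix.F₄.Group :=
  stmt_6_general (isLiftable_simple _) (closure_range_simple _) φ h012 h123
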